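/- Let G1 be a k1-regular finite simple graph on n1 vertices (not necessarily connected) with k1 odd, and let G2 be a finite simple graph (not necessarily connected) whose maximum degree is at most k2 and whose minimum degree is at least 1. If (k1² − k1)/2 ≥ k2, then the Cartesian product G1 × G2 is antimagic. -/

import Mathlib

/-- The vertex sum at `v` under an edge labeling `f`: the sum of the labels of all
edges incident with `v`. -/
noncomputable def vertexSum {V : Type*} [Finite V] (G : SimpleGraph V)
    (f : Sym2 V → ℕ) (v : V) : ℕ :=
  ∑ e ∈ (G.incidenceSet v).toFinite.toFinset, f e

/-- A graph is antimagic if there is a bijection from its edge set to `{1, ..., m}`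
(`m` = number of edges) such that all vertex sums are pairwise distinct. -/
def IsAntimagic {V : Type*} [Finite V] (G : SimpleGraph V) : Prop :=
  ∃ f : Sym2 V → ℕ,
    Set.BijOn f G.edgeSet (Set.Icc 1 (Nat.card G.edgeSet)) ∧
    ∀ u v : V, u ≠ v → vertexSum G f u ≠ vertexSum G f v

open SimpleGraph

/-- number of ends of a walk at `v` -/
noncomputable def brk {V : Type} {G : SimpleGraph V} (v : V) (p : Σ u w : V, G.Walk u w) : ℕ :=
  open Classical in (if v = p.1 then 1 else 0) + (if v = p.2.1 then 1 else 0)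

open Classical in
theorem walk_lower {V : Type} {G : SimpleGraph V} (g : Sym2 V → ℤ) (C : ℤ) (v : V)
    {u' w : V} (q : G.Walk u' w) : ∀ (u : V) (h : G.Adj u u'),
    (∀ e ∈ (Walk.cons h q).edges, -C ≤ g e) →
    (Walk.cons h q).edges.IsChain (fun e f => 0 ≤ g e + g f) →
    (if v = u then g s(u, u') else 0) - C * (if v = w then 1 else 0) ≤
      ((Walk.cons h q).edges.map (fun e => if v ∈ e then g e else 0)).sum := by
  induction q with
  | @nil a =>
    intro u h hC _
    have := hC s(u, a) (by simp)
    have hne := h.ne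
    simp only [Walk.edges_cons, Walk.edges_nil, List.map_cons, List.map_nil, List.sum_cons,
      List.sum_nil, Sym2.mem_iff]
    split_ifs <;> simp_all
  | @cons a b c h' q ih =>
    intro u h hC hch
    have hne := h.ne
    have key := ih a h' (fun e he => hC e (by
      rw [Walk.edges_cons]; exact List.mem_cons_of_mem _ he)) (by
      rw [Walk.edges_cons] at hch; exact hch.tail)
    have h2 : 0 ≤ g s(u, a) + g s(a, b) := by
      simp only [Walk.edges_cons, List.isChain_cons_cons] at hch
      exact hch.1
    rw [Walk.edges_cons, List.map_cons, List.sum_cons]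
    by_cases h1 : v = u
    · subst h1
      simp only [hne, if_false, if_true, Sym2.mem_iff, true_or] at key ⊢
      linarith
    · by_cases h3 : v = a
      · subst h3
        simp only [h1, if_false, if_true, Sym2.mem_iff, or_true] at key ⊢
        linarith
      · simp only [h1, h3, if_false, Sym2.mem_iff, or_self] at key ⊢
        linarith

theorem walk_lower' {V : Type} {G : SimpleGraph V} (g : Sym2 V → ℤ) (C : ℤ) (hC0 : 0 ≤ C) (v : V)
    (p : Σ u w : V, G.Walk u w)
    (hC : ∀ e ∈ p.2.2.edges, -C ≤ g e)
    (hch : p.2.2.edges.IsChain (fun e f => 0 ≤ g e + g f)) :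
    open Classical in - C * brk v p ≤
      (p.2.2.edges.map (fun e => if v ∈ e then g e else 0)).sum := by
  classical
  obtain ⟨u, w, p⟩ := p
  cases p with
  | nil => 
    simp only [Walk.edges_nil, List.map_nil, List.sum_nil]
    nlinarith [Int.natCast_nonneg (brk v (⟨u, u, Walk.nil⟩ : Σ u w : V, G.Walk u w))]
  | @cons _ a _ h q =>
    have := walk_lower g C v q u h hC hch
    refine le_trans ?_ this
    have h1 := hC s(u, a) (by simp)
    unfold brk
    dsimp only
    split_ifs <;> push_cast <;> linarith

theorem walk_parity {V : Type} {G : SimpleGraph V} (v : V) {u w : V} (p : G.Walk u w) :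
    open Classical in Even ((p.edges.map (fun e => if v ∈ e then 1 else 0)).sum + brk v ⟨u, w, p⟩) := by
  classical
  unfold brk
  induction p with
  | nil => simp only [Walk.edges_nil, List.map_nil, List.sum_nil]; exact ⟨_, zero_add _⟩
  | @cons a b c h q ih =>
    have hne := h.ne
    rw [Walk.edges_cons, List.map_cons, List.sum_cons]
    simp only [Sym2.mem_iff] at ih ⊢
    rw [Nat.even_iff] at *
    by_cases h1 : v = a
    · subst h1
      simp only [hne, if_false, if_true, true_or] at ih ⊢
      omega
    · by_cases h3 : v = b
      · subst h3
        simp only [h1, if_false, if_true, or_true] at ih ⊢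
        omega
      · simp only [h1, h3, if_false, or_self] at ih ⊢
        omega

theorem merge {V : Type} {G : SimpleGraph V} (v : V) (p q : Σ u w : V, G.Walk u w)
    (hp : 1 ≤ brk v p) (hq : 1 ≤ brk v q) : ∃ r : Σ u w : V, G.Walk u w,
    (r.2.2.edges : Multiset (Sym2 V)) = p.2.2.edges + q.2.2.edges := by
  classical
  have A : ∀ p : Σ u w : V, G.Walk u w, 1 ≤ brk v p → ∃ (x : V) (p' : G.Walk x v),
      (p'.edges : Multiset (Sym2 V)) = p.2.2.edges := by
    rintro ⟨u, w, p⟩ h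
    unfold brk at h
    dsimp only at h
    by_cases h1 : v = w
    · subst h1; exact ⟨u, p, rfl⟩
    · by_cases h2 : v = u
      · subst h2; exact ⟨w, p.reverse, by simp⟩
      · simp [h1, h2] at h
  obtain ⟨x, p', hp'⟩ := A p hp
  obtain ⟨y, q', hq'⟩ := A q hq
  refine ⟨⟨x, y, p'.append q'.reverse⟩, ?_⟩
  rw [← hp', ← hq']
  simp only [Walk.edges_append, Walk.edges_reverse, Multiset.coe_add, Multiset.coe_eq_coe]
  exact (List.reverse_perm _).append_left _

theorem exists_decomp {V : Type} (G : SimpleGraph V) (E : Multiset (Sym2 V))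
    (hE : ∀ e ∈ E, e ∈ G.edgeSet) : ∃ M : Multiset (Σ u w : V, G.Walk u w),
    (M.map (fun p => (p.2.2.edges : Multiset (Sym2 V)))).sum = E := by
  induction E using Multiset.induction_on with
  | empty => exact ⟨0, by simp⟩
  | cons e E ih =>
    obtain ⟨M, hM⟩ := ih (fun f hf => hE f (Multiset.mem_cons_of_mem hf))
    have he := hE e (Multiset.mem_cons_self _ _)
    induction e with | _ a b =>
    rw [mem_edgeSet] at he
    refine ⟨⟨a, b, he.toWalk⟩ ::ₘ M, ?_⟩
    rw [Multiset.map_cons, Multiset.sum_cons, hM]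
    simp [Adj.toWalk]

theorem exists_pos {α : Type} (f : α → ℕ) (M : Multiset α) (h : 1 ≤ (M.map f).sum) :
    ∃ a ∈ M, 1 ≤ f a := by
  by_contra! hc
  have : (M.map f).sum = 0 := by
    rw [Multiset.sum_eq_zero_iff]
    intro x hx
    obtain ⟨a, ha, rfl⟩ := Multiset.mem_map.1 hx
    have := hc a ha
    omega
  omega

theorem exists_good_decomp {V : Type} (G : SimpleGraph V) (E : Multiset (Sym2 V))
    (hE : ∀ e ∈ E, e ∈ G.edgeSet) : ∃ M : Multiset (Σ u w : V, G.Walk u w),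
    (M.map (fun p => (p.2.2.edges : Multiset (Sym2 V)))).sum = E ∧
    ∀ v, (M.map (brk v)).sum ≤ 2 := by
  classical
  have hex : ∃ n : ℕ, ∃ M : Multiset (Σ u w : V, G.Walk u w), M.card = n ∧
    (M.map (fun p => (p.2.2.edges : Multiset (Sym2 V)))).sum = E := by
    obtain ⟨M, hM⟩ := exists_decomp G E hE
    exact ⟨_, M, rfl, hM⟩
  obtain ⟨M, hc, hM⟩ := Nat.find_spec hex
  refine ⟨M, hM, fun v => ?_⟩
  by_contra! hlt
  have hle : ∀ p : Σ u w : V, G.Walk u w, brk v p ≤ 2 := by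
    intro p; unfold brk; split_ifs <;> omega
  obtain ⟨p, hp, hp1⟩ := exists_pos (brk v) M (by omega)
  obtain ⟨M1, rfl⟩ := Multiset.exists_cons_of_mem hp
  rw [Multiset.map_cons, Multiset.sum_cons] at hlt
  have := hle p
  obtain ⟨q, hq, hq1⟩ := exists_pos (brk v) M1 (by omega)
  obtain ⟨M2, rfl⟩ := Multiset.exists_cons_of_mem hq
  obtain ⟨r, hr⟩ := merge v p q hp1 hq1
  refine Nat.find_min hex (m := (r ::ₘ M2).card) ?_ ⟨r ::ₘ M2, rfl, ?_⟩
  · rw [← hc]; simp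
  · rw [← hM]
    simp only [Multiset.map_cons, Multiset.sum_cons, hr, add_assoc]

def alt (m i : ℕ) : ℕ := if i % 2 = 0 then i / 2 + 1 else m - i / 2

theorem lower_all {V : Type} {G : SimpleGraph V} (L : List (Σ u w : V, G.Walk u w))
    (g : Sym2 V → ℤ) (C : ℤ) (hC0 : 0 ≤ C) (v : V)
    (hC : ∀ e ∈ L.flatMap (fun p => p.2.2.edges), -C ≤ g e)
    (hch : (L.flatMap (fun p => p.2.2.edges)).IsChain (fun e f => 0 ≤ g e + g f)) :
    open Classical in - C * (L.map (brk v)).sum ≤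
      ((L.flatMap (fun p => p.2.2.edges)).map (fun e => if v ∈ e then g e else 0)).sum := by
  classical
  induction L with
  | nil => simp
  | cons p L ih =>
    rw [List.flatMap_cons] at *
    rw [List.isChain_append] at hch
    have h1 := walk_lower' g C hC0 v p (fun e he => hC e (List.mem_append_left _ he)) hch.1
    have h2 := ih (fun e he => hC e (List.mem_append_right _ he)) hch.2.1
    rw [List.map_append, List.sum_append, List.map_cons, List.sum_cons]
    rw [Nat.cast_add, mul_add]
    linarith

theorem parity_all {V : Type} {G : SimpleGraph V} (L : List (Σ u w : V, G.Walk u w)) (v : V) :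
    open Classical in Even (((L.flatMap (fun p => p.2.2.edges)).map (fun e => if v ∈ e then 1 else 0)).sum
      + (L.map (brk v)).sum) := by
  classical
  induction L with
  | nil => simp
  | cons p L ih =>
    rw [List.flatMap_cons, List.map_append, List.sum_append, List.map_cons, List.sum_cons]
    have := walk_parity v p.2.2
    rw [Nat.even_iff] at *
    have h3 : brk v ⟨p.fst, p.snd.fst, p.snd.snd⟩ = brk v p := rfl
    rw [h3] at this
    omega

theorem chain_idx {α : Type} [DecidableEq α] (E : List α) (hn : E.Nodup) (h : ℕ → ℤ)
    (hh : ∀ i, i + 1 < E.length → 0 ≤ h i + h (i + 1)) :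
    E.IsChain (fun e f => 0 ≤ h (E.idxOf e) + h (E.idxOf f)) := by
  rw [List.isChain_iff_getElem]
  intro i hi
  rw [hn.idxOf_getElem, hn.idxOf_getElem]
  exact hh i hi

open Classical in
theorem sum_inc {V : Type} [Fintype V] (G : SimpleGraph V) {R : Type} [AddCommMonoid R]
    (g : Sym2 V → R) (v : V) :
    ∑ e ∈ G.edgeFinset, (if v ∈ e then g e else 0) = ∑ w ∈ G.neighborFinset v, g s(v, w) := by
  rw [← Finset.sum_filter]
  symm
  refine Finset.sum_bij (fun w _ => s(v, w)) ?_ ?_ ?_ ?_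
  · intro w hw; simpa using hw
  · intro a _ b _ h; exact Sym2.congr_right.1 h
  · intro e he
    simp only [Finset.mem_filter, mem_edgeFinset] at he
    obtain ⟨h1, w, rfl⟩ := he
    exact ⟨w, by simpa using h1, rfl⟩
  · intros; rfl

open Classical in
theorem balanced {V : Type} [Fintype V] (G : SimpleGraph V) (k : ℕ) (hk : Odd k)
    (hreg : ∀ v, G.degree v = k) : ∃ f : Sym2 V → ℕ,
    Set.BijOn f G.edgeSet (Set.Icc 1 G.edgeFinset.card) ∧
    ∀ u v, 2 * ∑ w ∈ G.neighborFinset u, f s(u, w) ≤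
      2 * ∑ w ∈ G.neighborFinset v, f s(v, w) + 2 * G.edgeFinset.card + k := by
  obtain ⟨M, hM, hbr⟩ := exists_good_decomp G G.edgeFinset.val (by intro e he; simpa using he)
  set L := M.toList with hL
  set E := L.flatMap (fun p => p.2.2.edges) with hEdef
  have hE : (E : Multiset (Sym2 V)) = G.edgeFinset.val := by
    rw [← hM, ← Multiset.coe_toList M, ← hL, hEdef]
    clear_value L
    clear hL hEdef E
    induction L with
    | nil => simp
    | cons p L ih =>
      rw [List.flatMap_cons, ← Multiset.coe_add, ih]
      simp
  have hn : E.Nodup := by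
    rw [← Multiset.coe_nodup, hE]; exact G.edgeFinset.nodup
  have hmem : ∀ e, e ∈ E ↔ e ∈ G.edgeSet := by
    intro e
    rw [← Multiset.mem_coe, hE]; simp
  have hlen : E.length = G.edgeFinset.card := by
    rw [← Multiset.coe_card, hE]; rfl
  set m := G.edgeFinset.card with hm
  have hsum : ∀ {R : Type} [AddCommMonoid R] (g : Sym2 V → R) (v : V),
      (E.map (fun e => if v ∈ e then g e else 0)).sum = ∑ w ∈ G.neighborFinset v, g s(v, w) := by
    intro R _ g v
    rw [← sum_inc, Finset.sum, ← hE]; simp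
  have hb : ∀ v, (L.map (brk v)).sum = 1 := by
    intro v
    have h1 := hbr v
    rw [← Multiset.coe_toList M, ← hL, Multiset.map_coe, Multiset.sum_coe] at h1
    have h2 := parity_all L v
    rw [← hEdef, hsum] at h2
    simp only [Finset.sum_const, smul_eq_mul, mul_one, card_neighborFinset_eq_degree, hreg] at h2
    rw [Nat.even_iff] at h2
    rw [Nat.odd_iff] at hk
    omega
  have hidx : ∀ e ∈ E, E.idxOf e < m := by
    intro e he; rw [← hlen]; exact List.idxOf_lt_length_of_mem he
  have low : ∀ (h : ℕ → ℤ), (∀ i, i + 1 < m → 0 ≤ h i + h (i + 1)) → (∀ i < m, -(m : ℤ) ≤ h i) →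
      ∀ v, -(m : ℤ) ≤ ∑ w ∈ G.neighborFinset v, h (E.idxOf s(v, w)) := by
    intro h h1 h2 v
    have := lower_all L (fun e => h (E.idxOf e)) m (by positivity) v
      (fun e he => h2 _ (hidx e he)) (chain_idx E hn h (by rw [hlen]; exact h1))
    rw [hb v, ← hEdef, hsum] at this
    simpa using this
  refine ⟨fun e => alt m (E.idxOf e), ?_, ?_⟩
  · have hmaps : Set.MapsTo (fun e => alt m (E.idxOf e)) G.edgeSet (Set.Icc 1 m) := by
      intro e he
      have := hidx e ((hmem e).2 he)
      simp only [alt, Set.mem_Icc]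
      split_ifs <;> omega
    have hinj : Set.InjOn (fun e => alt m (E.idxOf e)) G.edgeSet := by
      intro e he e' he' heq
      have h1 := hidx e ((hmem e).2 he)
      have h2 := hidx e' ((hmem e').2 he')
      refine (List.idxOf_inj ((hmem e).2 he)).1 ?_
      simp only [alt] at heq
      split_ifs at heq <;> omega
    refine ⟨hmaps, hinj, ?_⟩
    have := Finset.surjOn_of_injOn_of_card_le (s := G.edgeFinset) (t := Finset.Icc 1 m)
      (fun e => alt m (E.idxOf e)) (by simpa using hmaps) (by simpa using hinj) (by simp [hm])
    simpa using this
  · have lo := low (fun i => 2 * (alt m i : ℤ) - (m + 1))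
      (by intro i hi; simp only [alt]; split_ifs <;> omega)
      (by intro i hi; simp only [alt]; split_ifs <;> omega)
    have hi := low (fun i => 1 - (2 * (alt m i : ℤ) - (m + 1)))
      (by intro i hi; simp only [alt]; split_ifs <;> omega)
      (by intro i hi; simp only [alt]; split_ifs <;> omega)
    intro u v
    have h1 := lo v
    have h2 := hi u
    simp only [Finset.sum_sub_distrib, ← Finset.mul_sum, Finset.sum_const, card_neighborFinset_eq_degree, hreg] at h1 h2
    zify
    simp only [nsmul_eq_mul] at h1 h2
    linarith

theorem vertexSum_eq {V : Type} [Finite V] [Fintype V] (G : SimpleGraph V) (f : Sym2 V → ℕ) (v : V) :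
    open Classical in vertexSum G f v = ∑ w ∈ G.neighborFinset v, f s(v, w) := by
  classical
  rw [← sum_inc, ← Finset.sum_filter, vertexSum]
  apply Finset.sum_congr _ (fun _ _ => rfl)
  ext e
  simp [incidenceSet]

theorem exists_rank {V : Type} [Fintype V] (φ : V → ℕ) :
    ∃ r : V ≃ Fin (Fintype.card V), ∀ x y, r x < r y → φ x ≤ φ y := by
  classical
  let e := Fintype.equivFin V
  have hm := Tuple.monotone_sort (φ ∘ e.symm)
  refine ⟨e.trans (Tuple.sort (φ ∘ e.symm)).symm, fun x y h => ?_⟩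
  have := hm h.le
  simpa using this

theorem divmod_inj {n a b c d : ℕ} (hb : b < n) (hd : d < n) (h : n * a + b = n * c + d) :
    a = c ∧ b = d := by
  have hn : 0 < n := by omega
  have h1 : (n * a + b) / n = a := by
    rw [Nat.mul_add_div hn, Nat.div_eq_of_lt hb, add_zero]
  have h2 : (n * c + d) / n = c := by
    rw [Nat.mul_add_div hn, Nat.div_eq_of_lt hd, add_zero]
  have : a = c := by rw [← h1, ← h2, h]
  subst this
  exact ⟨rfl, by omega⟩

theorem divmod_ex {n t l : ℕ} (h : l < n * t) : ∃ a b, a < t ∧ b < n ∧ l = n * a + b := by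
  have hn : 0 < n := by
    rcases Nat.eq_zero_or_pos n with rfl | h'
    · simp at h
    · exact h'
  exact ⟨l / n, l % n, Nat.div_lt_of_lt_mul h, Nat.mod_lt _ hn, (Nat.div_add_mod l n).symm⟩

theorem exists_enum {V : Type} [Fintype V] (G : SimpleGraph V) :
    open Classical in ∃ τ : Sym2 V → ℕ, Set.BijOn τ G.edgeSet (Set.Iio G.edgeFinset.card) := by
  classical
  let L := G.edgeFinset.toList
  have hlen : L.length = G.edgeFinset.card := Finset.length_toList _
  have hmem : ∀ e, e ∈ L ↔ e ∈ G.edgeSet := by intro e; simp [L]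
  have hn : L.Nodup := Finset.nodup_toList _
  refine ⟨fun e => L.idxOf e, ?_, ?_, ?_⟩
  · intro e he
    rw [← hlen]
    exact List.idxOf_lt_length_of_mem ((hmem e).2 he)
  · intro e he e' he' h
    exact (List.idxOf_inj ((hmem e).2 he)).1 h
  · intro i hi
    rw [← hlen] at hi
    exact ⟨L[i]'hi, (hmem _).1 (List.getElem_mem _), hn.idxOf_getElem _ _⟩

/-- the labeling of the product -/
noncomputable def prodLabel {V₁ V₂ : Type} (n A m₁ : ℕ) (σ : Sym2 V₁ → ℕ) (τ : Sym2 V₂ → ℕ)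
    (r : V₁ → ℕ) (q : V₂ → ℕ) : Sym2 (V₁ × V₂) → ℕ :=
  open Classical in
  Sym2.lift ⟨fun a b => if a.2 = b.2 then A + m₁ * q a.2 + σ s(a.1, b.1)
    else if a.1 = b.1 then n * τ s(a.2, b.2) + r a.1 + 1 else 0, by
    intro a b
    dsimp only
    rw [Sym2.eq_swap (a := a.1), Sym2.eq_swap (a := a.2)]
    by_cases h : a.2 = b.2
    · simp [h]
    · by_cases h' : a.1 = b.1
      · simp [h, h', Ne.symm h]
      · simp [h, h', Ne.symm h, Ne.symm h']⟩

theorem prodLabel_one {V₁ V₂ : Type} (n A m₁ : ℕ) (σ : Sym2 V₁ → ℕ) (τ : Sym2 V₂ → ℕ)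
    (r : V₁ → ℕ) (q : V₂ → ℕ) (x y : V₁) (v : V₂) :
    prodLabel n A m₁ σ τ r q s((x, v), (y, v)) = A + m₁ * q v + σ s(x, y) := by
  simp [prodLabel]

theorem prodLabel_two {V₁ V₂ : Type} (n A m₁ : ℕ) (σ : Sym2 V₁ → ℕ) (τ : Sym2 V₂ → ℕ)
    (r : V₁ → ℕ) (q : V₂ → ℕ) (x : V₁) (v w : V₂) (h : v ≠ w) :
    prodLabel n A m₁ σ τ r q s((x, v), (x, w)) = n * τ s(v, w) + r x + 1 := by
  simp [prodLabel, h]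

theorem edge_cases {V₁ V₂ : Type} (G₁ : SimpleGraph V₁) (G₂ : SimpleGraph V₂)
    (e : Sym2 (V₁ × V₂)) (he : e ∈ (G₁ □ G₂).edgeSet) :
    (∃ x y v, G₁.Adj x y ∧ e = s((x, v), (y, v))) ∨ (∃ x v w, G₂.Adj v w ∧ e = s((x, v), (x, w))) := by
  induction e with | _ a b =>
  obtain ⟨x, v⟩ := a
  obtain ⟨y, w⟩ := b
  rw [mem_edgeSet, boxProd_adj] at he
  dsimp only at he
  rcases he with ⟨h, rfl⟩ | ⟨h, rfl⟩
  · exact Or.inl ⟨x, y, v, h, rfl⟩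
  · exact Or.inr ⟨x, v, w, h, rfl⟩

theorem prodLabel_bij {V₁ V₂ : Type} (G₁ : SimpleGraph V₁) (G₂ : SimpleGraph V₂)
    (n n₂ m₁ m₂ : ℕ) (σ : Sym2 V₁ → ℕ) (τ : Sym2 V₂ → ℕ) (r : V₁ ≃ Fin n) (q : V₂ ≃ Fin n₂)
    (hσ : Set.BijOn σ G₁.edgeSet (Set.Icc 1 m₁)) (hτ : Set.BijOn τ G₂.edgeSet (Set.Iio m₂)) :
    Set.BijOn (prodLabel n (n * m₂) m₁ σ τ (fun x => r x) (fun v => q v)) (G₁ □ G₂).edgeSet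
      (Set.Icc 1 (n * m₂ + m₁ * n₂)) := by
  have hσ1 : ∀ x y, G₁.Adj x y → 1 ≤ σ s(x, y) ∧ σ s(x, y) ≤ m₁ := fun x y h => hσ.mapsTo h
  have hτ1 : ∀ x y, G₂.Adj x y → τ s(x, y) < m₂ := fun x y h => hτ.mapsTo h
  have b1 : ∀ v : V₂, m₁ * (q v : ℕ) + m₁ ≤ m₁ * n₂ := fun v =>
    (Nat.mul_succ m₁ (q v)).symm.le.trans (Nat.mul_le_mul_left _ (q v).2)
  have b2 : ∀ v w, G₂.Adj v w → n * τ s(v, w) + n ≤ n * m₂ := fun v w h =>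
    (Nat.mul_succ n _).symm.le.trans (Nat.mul_le_mul_left _ (hτ1 v w h))
  refine ⟨?_, ?_, ?_⟩
  · intro e he
    rcases edge_cases G₁ G₂ e he with ⟨x, y, v, h, rfl⟩ | ⟨x, v, w, h, rfl⟩
    · rw [prodLabel_one]
      have := hσ1 x y h
      have := b1 v
      constructor <;> omega
    · rw [prodLabel_two _ _ _ _ _ _ _ _ _ _ h.ne]
      have := b2 v w h
      have := (r x).2
      constructor <;> omega
  · intro e he e' he' heq
    rcases edge_cases G₁ G₂ e he with ⟨x, y, v, h, rfl⟩ | ⟨x, v, w, h, rfl⟩ <;>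
    rcases edge_cases G₁ G₂ e' he' with ⟨x', y', v', h', rfl⟩ | ⟨x', v', w', h', rfl⟩
    · rw [prodLabel_one, prodLabel_one] at heq
      have h1 := hσ1 x y h
      have h2 := hσ1 x' y' h'
      obtain ⟨h3, h4⟩ := divmod_inj (n := m₁) (a := q v) (b := σ s(x, y) - 1) (c := q v')
        (d := σ s(x', y') - 1) (by omega) (by omega) (by omega)
      have h5 : v = v' := q.injective (Fin.ext h3)
      subst h5
      have h6 : s(x, y) = s(x', y') := hσ.injOn h h' (by omega)
      have := congrArg (Sym2.map (fun z => (z, v))) h6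
      simpa using this
    · rw [prodLabel_one, prodLabel_two _ _ _ _ _ _ _ _ _ _ h'.ne] at heq
      have := hσ1 x y h
      have := b2 v' w' h'
      have := (r x').2
      omega
    · rw [prodLabel_one, prodLabel_two _ _ _ _ _ _ _ _ _ _ h.ne] at heq
      have := hσ1 x' y' h'
      have := b2 v w h
      have := (r x).2
      omega
    · rw [prodLabel_two _ _ _ _ _ _ _ _ _ _ h.ne, prodLabel_two _ _ _ _ _ _ _ _ _ _ h'.ne] at heq
      obtain ⟨h3, h4⟩ := divmod_inj (r x).2 (r x').2 (Nat.succ_injective heq)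
      have h5 : x = x' := r.injective (Fin.ext h4)
      subst h5
      have h6 : s(v, w) = s(v', w') := hτ.injOn h h' h3
      have := congrArg (Sym2.map (fun z => (x, z))) h6
      simpa using this
  · rintro l ⟨hl1, hl2⟩
    by_cases hl : l ≤ n * m₂
    · obtain ⟨a, b, ha, hb, hab⟩ := divmod_ex (n := n) (t := m₂) (l := l - 1) (by omega)
      obtain ⟨e, he, rfl⟩ := hτ.surjOn ha
      induction e with | _ v w =>
      have h : G₂.Adj v w := he
      refine ⟨s((r.symm ⟨b, hb⟩, v), (r.symm ⟨b, hb⟩, w)), ?_, ?_⟩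
      · rw [mem_edgeSet, boxProd_adj]; exact Or.inr ⟨h, rfl⟩
      · rw [prodLabel_two _ _ _ _ _ _ _ _ _ _ h.ne]
        simp only [Equiv.apply_symm_apply]
        omega
    · obtain ⟨a, b, ha, hb, hab⟩ := divmod_ex (n := m₁) (t := n₂) (l := l - n * m₂ - 1) (by omega)
      obtain ⟨e, he, hbe⟩ := hσ.surjOn (show b + 1 ∈ Set.Icc 1 m₁ from ⟨by omega, by omega⟩)
      induction e with | _ x y =>
      have h : G₁.Adj x y := he
      refine ⟨s((x, q.symm ⟨a, ha⟩), (y, q.symm ⟨a, ha⟩)), ?_, ?_⟩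
      · rw [mem_edgeSet, boxProd_adj]; exact Or.inl ⟨h, rfl⟩
      · rw [prodLabel_one]
        simp only [Equiv.apply_symm_apply, hbe]
        omega

open Classical in
theorem prod_sum {V₁ V₂ : Type} [Fintype V₁] [Fintype V₂] (G₁ : SimpleGraph V₁) (G₂ : SimpleGraph V₂)
    (n A m₁ : ℕ) (σ : Sym2 V₁ → ℕ) (τ : Sym2 V₂ → ℕ)
    (r : V₁ → ℕ) (q : V₂ → ℕ) (x : V₁) (v : V₂) :
    vertexSum (G₁ □ G₂) (prodLabel n A m₁ σ τ r q) (x, v) =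
      G₁.degree x * (A + m₁ * q v) + ∑ y ∈ G₁.neighborFinset x, σ s(x, y) +
      (∑ w ∈ G₂.neighborFinset v, (n * τ s(v, w) + 1) + G₂.degree v * r x) := by
  rw [vertexSum_eq, neighborFinset_boxProd, Finset.sum_disjUnion, Finset.sum_product,
    Finset.sum_product]
  congr 1
  · simp only [Finset.sum_singleton, prodLabel_one]
    rw [Finset.sum_add_distrib, Finset.sum_const, card_neighborFinset_eq_degree, smul_eq_mul]
  · simp only [Finset.sum_singleton]
    rw [← card_neighborFinset_eq_degree, ← smul_eq_mul, ← Finset.sum_const,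
      ← Finset.sum_add_distrib]
    refine Finset.sum_congr rfl fun w hw => ?_
    rw [prodLabel_two _ _ _ _ _ _ _ _ _ _ ((mem_neighborFinset _ _ _).1 hw).ne]
    ring

/-- If `G₁` is a `k₁`-regular graph with `k₁` odd (not necessarily connected), `G₂` has
maximum degree at most `k₂` and minimum degree at least `1`, and `(k₁² − k₁)/2 ≥ k₂`,
then the Cartesian product `G₁ □ G₂` is antimagic. -/
theorem boxProd_antimagic_odd {V₁ V₂ : Type} [Finite V₁] [Finite V₂]
    {n₁ k₁ k₂ : ℕ} (G₁ : SimpleGraph V₁) (G₂ : SimpleGraph V₂)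
    (hn₁ : Nat.card V₁ = n₁)
    (hreg : ∀ v : V₁, Nat.card (G₁.neighborSet v) = k₁)
    (hodd : Odd k₁)
    (hmax : ∀ v : V₂, Nat.card (G₂.neighborSet v) ≤ k₂)
    (hmin : ∀ v : V₂, 1 ≤ Nat.card (G₂.neighborSet v))
    (hineq : k₂ ≤ (k₁ ^ 2 - k₁) / 2) :
    IsAntimagic (G₁ □ G₂) := by
  classical
  have := Fintype.ofFinite V₁
  have := Fintype.ofFinite V₂
  have hd1 : ∀ v, G₁.degree v = k₁ := fun v => by
    rw [← hreg v, Nat.card_eq_fintype_card, card_neighborSet_eq_degree]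
  have hd2 : ∀ v, G₂.degree v ≤ k₂ := fun v => by
    have := hmax v
    rwa [Nat.card_eq_fintype_card, card_neighborSet_eq_degree] at this
  have hd2' : ∀ v, 1 ≤ G₂.degree v := fun v => by
    have := hmin v
    rwa [Nat.card_eq_fintype_card, card_neighborSet_eq_degree] at this
  obtain ⟨σ, hσ, hbal⟩ := balanced G₁ k₁ hodd hd1
  obtain ⟨τ, hτ⟩ := exists_enum G₂
  set m₁ := G₁.edgeFinset.card with hm1
  set m₂ := G₂.edgeFinset.card
  set n := Fintype.card V₁ with hn
  obtain ⟨r, hr⟩ := exists_rank (fun x => ∑ y ∈ G₁.neighborFinset x, σ s(x, y))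
  obtain ⟨q, hq⟩ := exists_rank (fun v => ∑ w ∈ G₂.neighborFinset v, (n * τ s(v, w) + 1))
  have hbij := prodLabel_bij G₁ G₂ n (Fintype.card V₂) m₁ m₂ σ τ r q hσ hτ
  have hcard : Nat.card (G₁ □ G₂).edgeSet = n * m₂ + m₁ * Fintype.card V₂ := by
    rw [Nat.card_congr hbij.equiv, Nat.card_eq_fintype_card]; simp
  have h2m : 2 * m₁ = n * k₁ := by
    rw [hm1, ← sum_degrees_eq_twice_card_edges]
    simp [hd1, hn]
  have lt_of : ∀ (x y : V₁) (v w : V₂), q v < q w →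
      vertexSum (G₁ □ G₂) (prodLabel n (n * m₂) m₁ σ τ (fun x => r x) (fun v => q v)) (x, v) <
      vertexSum (G₁ □ G₂) (prodLabel n (n * m₂) m₁ σ τ (fun x => r x) (fun v => q v)) (y, w) := by
    intro x y v w hvw
    rw [prod_sum, prod_sum, hd1, hd1]
    have hB := hq v w hvw
    have hs := hbal x y
    have hvw' : (q v : ℕ) + 1 ≤ q w := hvw
    have e1 : k₁ * m₁ * ((q v : ℕ) + 1) ≤ k₁ * m₁ * q w := Nat.mul_le_mul_left _ hvw'
    have e2 : G₂.degree v * (r x : ℕ) ≤ k₂ * (n - 1) :=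
      Nat.mul_le_mul (hd2 v) (by have := (r x).2; omega)
    have hk2 : 1 ≤ k₂ := (hd2' v).trans (hd2 v)
    have e3 : 2 * k₂ + k₁ ≤ k₁ ^ 2 := by
      have : k₁ ≤ k₁ ^ 2 := Nat.le_self_pow (by norm_num) _
      omega
    have hk3 : 3 ≤ k₁ := by
      by_contra hlt
      obtain ⟨t, ht⟩ := hodd
      have : k₁ = 1 := by omega
      subst this
      omega
    obtain ⟨N, hN⟩ : ∃ N, n = N + 1 := ⟨n - 1, by have := (r x).2; omega⟩
    have key : 2 * m₁ + k₁ + 2 * (k₂ * (n - 1)) < 2 * (k₁ * m₁) := by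
      have : 2 * (k₁ * m₁) = k₁ * (n * k₁) := by rw [← h2m]; ring
      rw [this, h2m, hN, Nat.add_sub_cancel]
      have e4 := Nat.mul_le_mul_right N e3
      nlinarith
    have e5 : 0 ≤ G₂.degree w * (r y : ℕ) := Nat.zero_le _
    nlinarith
  refine ⟨_, hcard ▸ hbij, ?_⟩
  rintro ⟨x, v⟩ ⟨y, w⟩ hne
  rcases lt_trichotomy (q v) (q w) with h | h | h
  · exact (lt_of x y v w h).ne
  · have hvw := q.injective h
    subst hvw
    have same : ∀ x y, r x < r y →
      vertexSum (G₁ □ G₂) (prodLabel n (n * m₂) m₁ σ τ (fun x => r x) (fun v => q v)) (x, v) <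
      vertexSum (G₁ □ G₂) (prodLabel n (n * m₂) m₁ σ τ (fun x => r x) (fun v => q v)) (y, v) := by
      intro x y hxy
      rw [prod_sum, prod_sum, hd1, hd1]
      have h1 := hr x y hxy
      have h2 : G₂.degree v * (r x : ℕ) < G₂.degree v * (r y : ℕ) :=
        Nat.mul_lt_mul_of_pos_left hxy (hd2' v)
      omega
    rcases lt_trichotomy (r x) (r y) with h' | h' | h'
    · exact (same x y h').ne
    · exact absurd (by rw [r.injective h']) hne
    · exact (same y x h').ne'
  · exact (lt_of y x w v h).ne'
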